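/- Let 0 < α < (n+2m)/(2m−n), and let u be a positive smooth function on ℝⁿ such that for some c > 0 one has c^{−1}(1+|x|²)^{(2m−n)/2} ≤ u(x) ≤ c(1+|x|²)^{(2m−n)/2} for all x, and u(x) = γ ∫_{ℝⁿ} |x−y|^{2m−n} (2/(1+|y|²))^{(n+2m)/2 + α(n−2m)/2} u(y)^{−α} dy for all x ∈ ℝⁿ. Then u(x) = ((1+|x|²)/2)^{(2m−n)/2} for every x ∈ ℝⁿ. -/

import Mathlib

open MeasureTheory

/-!
Write `p = 2m - n` and `f = (2 / (1 + |y|²))^σ u^(-α)`, so that `u` is a multiple of the potential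
of `f` with kernel `|x - y|^p`. Since the weight is strictly decreasing in `|y|` and `u^(-α)` is
decreasing in `u`, the moving plane method shows that solutions are radial. It is run on the
difference of the kernel and its reflection in the plane `⟪x, e⟫ = l`, rescaled so as not to
degenerate at `l = ∞`, at `|x| = ∞` and on the plane: the result lives on a compact parameter space
and is positive at `l = ∞`, so a continuity argument replaces all estimates at infinity.

The exponents make the equation invariant under inversion in every sphere with centre `a` and
squared radius `1 + |a|²` (in the stereographic picture, an isometry of the round sphere). Hence all
these Kelvin transforms of `u` are radial, which forces `u = κ ((1 + |x|²) / 2)^(p/2)`. The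
equation at the origin then reads `κ = κ^(-α)`, so `κ = 1`.
-/

section

open Set Filter Topology EuclideanGeometry
open scoped RealInnerProductSpace

/-- The quotient `(a ^ p - b ^ p) / (a ^ 2 - b ^ 2)`, with the common factor `a - b` cancelled so
that it makes sense for `a = b`. For `a + b = 0` it has the junk value `0`. -/
noncomputable def powDiffQuot (p : ℕ) (a b : ℝ) : ℝ :=
  (∑ i ∈ Finset.range p, a ^ i * b ^ (p - 1 - i)) / (a + b)

section PowDiffQuot

variable {p : ℕ} {a b : ℝ}

theorem powDiffQuot_comm (p : ℕ) (a b : ℝ) : powDiffQuot p a b = powDiffQuot p b a := by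
  rw [powDiffQuot, powDiffQuot, add_comm a b, geom_sum₂_comm]

theorem powDiffQuot_mul_sq_sub_sq (p : ℕ) (ha : 0 ≤ a) (hb : 0 ≤ b) :
    powDiffQuot p a b * (a ^ 2 - b ^ 2) = a ^ p - b ^ p := by
  rcases eq_or_ne (a + b) 0 with h | h
  · obtain ⟨rfl, rfl⟩ := (add_eq_zero_iff_of_nonneg ha hb).1 h
    simp
  · rw [← (Commute.all a b).geom_sum₂_mul p, powDiffQuot]
    field_simp
    ring

theorem powDiffQuot_nonneg (p : ℕ) (ha : 0 ≤ a) (hb : 0 ≤ b) : 0 ≤ powDiffQuot p a b := by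
  unfold powDiffQuot
  positivity

theorem powDiffQuot_pos (hp : p ≠ 0) (ha : 0 ≤ a) (hb : 0 ≤ b) (hab : 0 < a + b) :
    0 < powDiffQuot p a b := by
  wlog h : 0 < a generalizing a b
  · rw [powDiffQuot_comm]
    exact this hb ha (add_comm a b ▸ hab) (by linarith)
  refine div_pos (Finset.sum_pos' (fun i _ => by positivity)
    ⟨p - 1, Finset.mem_range.2 (by omega), ?_⟩) hab
  rw [Nat.sub_self, pow_zero, mul_one]
  positivity

theorem abs_powDiffQuot_mul_le (p : ℕ) {z K : ℝ} (ha : 0 ≤ a) (hb : 0 ≤ b) (hK : 0 ≤ K)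
    (hz : |z| ≤ (a + b) * K) : |powDiffQuot p a b * z| ≤ p * (a + b) ^ (p - 1) * K := by
  have hterm : ∀ i ∈ Finset.range p, a ^ i * b ^ (p - 1 - i) ≤ (a + b) ^ (p - 1) := by
    intro i hi
    have hip : i + (p - 1 - i) = p - 1 := by have := Finset.mem_range.1 hi; omega
    calc a ^ i * b ^ (p - 1 - i) ≤ (a + b) ^ i * (a + b) ^ (p - 1 - i) := by
          gcongr <;> linarith
      _ = (a + b) ^ (p - 1) := by rw [← pow_add, hip]
  calc |powDiffQuot p a b * z| = powDiffQuot p a b * |z| := by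
        rw [abs_mul, abs_of_nonneg (powDiffQuot_nonneg p ha hb)]
    _ ≤ powDiffQuot p a b * ((a + b) * K) :=
        mul_le_mul_of_nonneg_left hz (powDiffQuot_nonneg p ha hb)
    _ = powDiffQuot p a b * (a + b) * K := by ring
    _ ≤ (∑ i ∈ Finset.range p, a ^ i * b ^ (p - 1 - i)) * K := by
        gcongr
        rw [powDiffQuot, div_mul_eq_mul_div]
        exact div_le_of_le_mul₀ (by positivity) (by positivity) le_rfl
    _ ≤ p * (a + b) ^ (p - 1) * K := by
        gcongr
        simpa using Finset.sum_le_sum hterm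

theorem continuousAt_powDiffQuot (p : ℕ) {q : ℝ × ℝ} (h : q.1 + q.2 ≠ 0) :
    ContinuousAt (fun q : ℝ × ℝ => powDiffQuot p q.1 q.2) q := by
  unfold powDiffQuot
  fun_prop (disch := exact h)

theorem measurable_powDiffQuot (p : ℕ) :
    Measurable fun q : ℝ × ℝ => powDiffQuot p q.1 q.2 := by
  unfold powDiffQuot
  fun_prop

end PowDiffQuot

section PlaneReflection

variable {E : Type*} [NormedAddCommGroup E] [InnerProductSpace ℝ E] {e : E}

/-- The reflection of `x` in the hyperplane `⟪x, e⟫ = τ`, where `e` is a unit vector. It is given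
by a formula, rather than as the reflection of an affine subspace, because the moving plane method
varies `τ` and `x` jointly. -/
noncomputable def planeReflection (e : E) (τ : ℝ) (x : E) : E := x + (2 * (τ - ⟪x, e⟫)) • e

theorem planeReflection_eq_reflection_add (he : ‖e‖ = 1) (τ : ℝ) (x : E) :
    planeReflection e τ x = (ℝ ∙ e)ᗮ.reflection x + (2 * τ) • e := by
  rw [Submodule.reflection_orthogonal_apply, Submodule.reflection_singleton_apply, he,
    planeReflection, real_inner_comm]
  module

theorem inner_planeReflection (he : ‖e‖ = 1) (τ : ℝ) (x : E) :
    ⟪planeReflection e τ x, e⟫ = 2 * τ - ⟪x, e⟫ := by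
  simp only [planeReflection, inner_add_left, inner_smul_left, real_inner_self_eq_norm_sq, he,
    conj_trivial]
  ring

theorem planeReflection_planeReflection (he : ‖e‖ = 1) (τ : ℝ) (x : E) :
    planeReflection e τ (planeReflection e τ x) = x := by
  rw [planeReflection, inner_planeReflection he, planeReflection]
  module

theorem isometry_planeReflection (he : ‖e‖ = 1) (τ : ℝ) : Isometry (planeReflection e τ) := by
  rw [funext (planeReflection_eq_reflection_add he τ)]
  exact (isometry_add_right _).comp (ℝ ∙ e)ᗮ.reflection.isometry

theorem norm_planeReflection_sub_planeReflection (he : ‖e‖ = 1) (τ : ℝ) (x y : E) :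
    ‖planeReflection e τ x - planeReflection e τ y‖ = ‖x - y‖ := by
  simpa only [dist_eq_norm] using (isometry_planeReflection he τ).dist_eq x y

theorem norm_sub_planeReflection (he : ‖e‖ = 1) (τ : ℝ) (x y : E) :
    ‖x - planeReflection e τ y‖ = ‖planeReflection e τ x - y‖ := by
  rw [← norm_planeReflection_sub_planeReflection he τ x, planeReflection_planeReflection he]

theorem norm_planeReflection_sub_sq (he : ‖e‖ = 1) (τ : ℝ) (x y : E) :
    ‖planeReflection e τ x - y‖ ^ 2 - ‖x - y‖ ^ 2 = 4 * (τ - ⟪x, e⟫) * (τ - ⟪y, e⟫) := by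
  rw [planeReflection, add_sub_right_comm, norm_add_sq_real, norm_smul, he, inner_smul_right,
    inner_sub_left, mul_one, Real.norm_eq_abs, sq_abs]
  ring

theorem norm_lt_norm_planeReflection (he : ‖e‖ = 1) {τ : ℝ} (hτ : 0 < τ) {x : E}
    (hx : ⟪x, e⟫ < τ) : ‖x‖ < ‖planeReflection e τ x‖ := by
  have h := norm_planeReflection_sub_sq he τ x 0
  have hpos : 0 < (τ - ⟪x, e⟫) * τ := mul_pos (sub_pos.2 hx) hτ
  simp only [sub_zero, inner_zero_left] at h
  exact lt_of_pow_lt_pow_left₀ 2 (norm_nonneg _) (by linarith)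

theorem norm_planeReflection_le (he : ‖e‖ = 1) {τ : ℝ} (hτ : 0 ≤ τ) (x : E) :
    ‖planeReflection e τ x‖ ≤ ‖x‖ + 2 * τ := by
  rw [planeReflection_eq_reflection_add he]
  refine (norm_add_le _ _).trans_eq ?_
  rw [LinearIsometryEquiv.norm_map, norm_smul, he, mul_one, Real.norm_of_nonneg (by positivity)]

theorem two_mul_abs_sub_inner_le (he : ‖e‖ = 1) (τ : ℝ) (x y : E) :
    2 * |τ - ⟪y, e⟫| ≤ ‖planeReflection e τ x - y‖ + ‖x - y‖ := by
  have hinner : ⟪planeReflection e τ x - y + (x - y), e⟫ = 2 * (τ - ⟪y, e⟫) := by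
    simp only [inner_add_left, inner_sub_left, inner_planeReflection he]
    ring
  calc 2 * |τ - ⟪y, e⟫| = |⟪planeReflection e τ x - y + (x - y), e⟫| := by
        rw [hinner, abs_mul, abs_two]
    _ ≤ ‖planeReflection e τ x - y + (x - y)‖ * ‖e‖ := abs_real_inner_le_norm _ _
    _ ≤ ‖planeReflection e τ x - y‖ + ‖x - y‖ := by
        rw [he, mul_one]
        exact norm_add_le _ _

theorem smul_planeReflection (e : E) (c τ : ℝ) (x : E) :
    c • planeReflection e τ x = planeReflection e (c * τ) (c • x) := by
  simp only [planeReflection, inner_smul_left, conj_trivial]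
  module

theorem measurePreserving_planeReflection [FiniteDimensional ℝ E] [MeasurableSpace E]
    [BorelSpace E] (he : ‖e‖ = 1) (τ : ℝ) : MeasurePreserving (planeReflection e τ) := by
  rw [funext (planeReflection_eq_reflection_add he τ)]
  exact (measurePreserving_add_right volume _).comp (LinearIsometryEquiv.measurePreserving _)

theorem planeReflection_normalize_sub {x y : E} (hxy : x ≠ y) (h : ‖x‖ = ‖y‖) :
    planeReflection (‖x - y‖⁻¹ • (x - y)) 0 x = y := by
  have hne : ‖x - y‖ ≠ 0 := norm_ne_zero_iff.2 (sub_ne_zero.2 hxy)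
  have hspan : (ℝ ∙ (‖x - y‖⁻¹ • (x - y))) = ℝ ∙ (x - y) :=
    Submodule.span_singleton_smul_eq (IsUnit.mk0 _ (inv_ne_zero hne)) _
  have hunit : ‖‖x - y‖⁻¹ • (x - y)‖ = 1 := norm_smul_inv_norm (𝕜 := ℝ) (sub_ne_zero.2 hxy)
  simp only [planeReflection_eq_reflection_add hunit, hspan, Submodule.reflection_sub h, mul_zero,
    zero_smul, add_zero]

end PlaneReflection

section MovingPlaneKernel

variable {E : Type*} [NormedAddCommGroup E] [InnerProductSpace ℝ E] {p : ℕ} {e : E} {k : E × ℝ}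
  {t : ℝ}

/-- For `(ξ, τ) = R⁻¹ • (x, l)` and `t = l⁻¹`, this is a positive multiple of
`‖planeReflection e l x - y‖ ^ p - ‖x - y‖ ^ p`, normalised so that it extends to
`l = ∞` (that is, `t = 0`), to `‖x‖ = ∞` (that is, `t * τ = 0`), and to `⟪x, e⟫ = l`. -/
noncomputable def movingPlaneKernel (p : ℕ) (e : E) (k : E × ℝ) (t : ℝ) (y : E) : ℝ :=
  powDiffQuot p ‖planeReflection e k.2 k.1 - (t * k.2) • y‖ ‖k.1 - (t * k.2) • y‖ *
    (1 - t * ⟪y, e⟫)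

/-- The pairs `(x, l)` with `0 ≤ l` and `⟪x, e⟫ ≤ l`, up to positive scaling: the parameters of the
moving plane method, compactified. -/
def movingPlaneParams (e : E) : Set (E × ℝ) :=
  {k | ‖k.1‖ + k.2 = 1 ∧ 0 ≤ k.2 ∧ ⟪k.1, e⟫ ≤ k.2}

theorem isCompact_movingPlaneParams [FiniteDimensional ℝ E] (e : E) :
    IsCompact (movingPlaneParams e) := by
  refine Metric.isCompact_of_isClosed_isBounded ?_ ?_
  · have hsum : IsClosed {k : E × ℝ | ‖k.1‖ + k.2 = 1} := isClosed_eq (by fun_prop) (by fun_prop)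
    have hτ : IsClosed {k : E × ℝ | 0 ≤ k.2} := isClosed_le (by fun_prop) (by fun_prop)
    have hinner : IsClosed {k : E × ℝ | ⟪k.1, e⟫ ≤ k.2} := isClosed_le (by fun_prop) (by fun_prop)
    exact hsum.inter (hτ.inter hinner)
  · refine isBounded_iff_forall_norm_le.2 ⟨1, fun k ⟨hsum, hτ, _⟩ => ?_⟩
    have hk := norm_nonneg k.1
    exact max_le (by linarith) (by rw [Real.norm_of_nonneg hτ]; linarith)

theorem inv_smul_mem_movingPlaneParams {l : ℝ} (hl : 0 < l) {x : E} (hx : ⟪x, e⟫ ≤ l) :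
    (l + ‖x‖)⁻¹ • (x, l) ∈ movingPlaneParams e := by
  have hR : 0 < l + ‖x‖ := by positivity
  refine ⟨?_, ?_, ?_⟩
  · simp only [Prod.smul_mk, norm_smul, norm_inv, Real.norm_of_nonneg hR.le, smul_eq_mul]
    field_simp
    ring
  · simp only [Prod.smul_mk, smul_eq_mul]
    positivity
  · simp only [Prod.smul_mk, inner_smul_left, smul_eq_mul, conj_trivial]
    gcongr

theorem norm_pow_sub_norm_pow_eq_mul_movingPlaneKernel (p : ℕ) (he : ‖e‖ = 1) {l R : ℝ}
    (hl : l ≠ 0) (hR : 0 < R) (x y : E) :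
    ‖planeReflection e l x - y‖ ^ p - ‖x - y‖ ^ p =
      R ^ p / R ^ 2 * (4 * (l - ⟪x, e⟫) * l) * movingPlaneKernel p e (R⁻¹ • (x, l)) l⁻¹ y := by
  set a := ‖planeReflection e l x - y‖
  set b := ‖x - y‖
  have hscale : l⁻¹ * (R⁻¹ * l) = R⁻¹ := by field_simp
  have hkernel : movingPlaneKernel p e (R⁻¹ • (x, l)) l⁻¹ y =
      powDiffQuot p (R⁻¹ * a) (R⁻¹ * b) * (1 - l⁻¹ * ⟪y, e⟫) := by
    simp only [movingPlaneKernel, Prod.smul_mk, smul_eq_mul, hscale, ← smul_planeReflection,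
      ← smul_sub, norm_smul, norm_inv, Real.norm_of_nonneg hR.le, a, b]
  have hsq : (R⁻¹ * a) ^ 2 - (R⁻¹ * b) ^ 2 =
      (4 * (l - ⟪x, e⟫) * l) * (1 - l⁻¹ * ⟪y, e⟫) / R ^ 2 := by
    have h := norm_planeReflection_sub_sq he l x y
    field_simp
    linarith
  have hquot := powDiffQuot_mul_sq_sub_sq p (a := R⁻¹ * a) (b := R⁻¹ * b) (by positivity)
    (by positivity)
  calc a ^ p - b ^ p = R ^ p * ((R⁻¹ * a) ^ p - (R⁻¹ * b) ^ p) := by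
        rw [mul_sub, ← mul_pow, ← mul_pow, mul_inv_cancel_left₀ hR.ne', mul_inv_cancel_left₀ hR.ne']
    _ = R ^ p * (powDiffQuot p (R⁻¹ * a) (R⁻¹ * b) *
          ((4 * (l - ⟪x, e⟫) * l) * (1 - l⁻¹ * ⟪y, e⟫) / R ^ 2)) := by rw [← hquot, hsq]
    _ = R ^ p / R ^ 2 * (4 * (l - ⟪x, e⟫) * l) *
          movingPlaneKernel p e (R⁻¹ • (x, l)) l⁻¹ y := by rw [hkernel]; ring

theorem movingPlaneKernel_planeReflection (p : ℕ) (he : ‖e‖ = 1) (k : E × ℝ) (ht : t ≠ 0) (y : E) :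
    movingPlaneKernel p e k t (planeReflection e t⁻¹ y) = -movingPlaneKernel p e k t y := by
  have hsmul : (t * k.2) • planeReflection e t⁻¹ y = planeReflection e k.2 ((t * k.2) • y) := by
    rw [smul_planeReflection, mul_right_comm, mul_inv_cancel₀ ht, one_mul]
  have hfactor : 1 - t * (2 * t⁻¹ - ⟪y, e⟫) = -(1 - t * ⟪y, e⟫) := by
    field_simp
    ring
  rw [movingPlaneKernel, hsmul, norm_planeReflection_sub_planeReflection he,
    norm_sub_planeReflection he, inner_planeReflection he, powDiffQuot_comm, hfactor, mul_neg,
    movingPlaneKernel]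

theorem norm_add_norm_le_of_mem_movingPlaneParams (he : ‖e‖ = 1) (hk : k ∈ movingPlaneParams e)
    (ht : 0 ≤ t) (y : E) :
    ‖planeReflection e k.2 k.1 - (t * k.2) • y‖ + ‖k.1 - (t * k.2) • y‖ ≤ 2 * (1 + t * ‖y‖) := by
  obtain ⟨hsum, hτ, -⟩ := hk
  have hτ1 : k.2 ≤ 1 := by linarith [norm_nonneg k.1]
  have hsmul : ‖(t * k.2) • y‖ ≤ t * ‖y‖ := by
    rw [norm_smul, Real.norm_of_nonneg (by positivity)]
    gcongr
    exact mul_le_of_le_one_right ht hτ1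
  linarith [norm_sub_le (planeReflection e k.2 k.1) ((t * k.2) • y),
    norm_sub_le k.1 ((t * k.2) • y), norm_planeReflection_le he hτ k.1]

/- At a zero of the denominator `‖…‖ + ‖…‖` of `powDiffQuot` the second factor of the kernel
vanishes to the same order, so that the kernel stays bounded even for `p = 1`. -/
theorem abs_one_sub_mul_inner_le (he : ‖e‖ = 1) (hk : k ∈ movingPlaneParams e) (ht : 0 ≤ t)
    (y : E) :
    |1 - t * ⟪y, e⟫| ≤
      (‖planeReflection e k.2 k.1 - (t * k.2) • y‖ + ‖k.1 - (t * k.2) • y‖) *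
        (2 * (1 + t * ‖y‖)) := by
  obtain ⟨hsum, hτ, -⟩ := hk
  set z := |1 - t * ⟪y, e⟫|
  set S := ‖planeReflection e k.2 k.1 - (t * k.2) • y‖ + ‖k.1 - (t * k.2) • y‖
  have hz : z ≤ 1 + t * ‖y‖ := by
    have hinner : |⟪y, e⟫| ≤ ‖y‖ := by simpa only [he, mul_one] using abs_real_inner_le_norm y e
    calc z ≤ |1| + |t * ⟪y, e⟫| := abs_sub _ _
      _ = 1 + t * |⟪y, e⟫| := by rw [abs_one, abs_mul, abs_of_nonneg ht]
      _ ≤ 1 + t * ‖y‖ := by gcongr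
  have hplane : 2 * (k.2 * z) ≤ S := by
    have hfactor : k.2 - ⟪(t * k.2) • y, e⟫ = k.2 * (1 - t * ⟪y, e⟫) := by
      rw [inner_smul_left, conj_trivial]
      ring
    simpa only [hfactor, abs_mul, abs_of_nonneg hτ] using
      two_mul_abs_sub_inner_le he k.2 k.1 ((t * k.2) • y)
  have hnorm : ‖k.1‖ ≤ S + t * k.2 * ‖y‖ := by
    calc ‖k.1‖ ≤ ‖k.1 - (t * k.2) • y‖ + ‖(t * k.2) • y‖ := norm_le_norm_sub_add _ _
      _ ≤ S + t * k.2 * ‖y‖ := by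
        rw [norm_smul, Real.norm_of_nonneg (by positivity)]
        gcongr
        exact le_add_of_nonneg_left (norm_nonneg _)
  have hS : 0 ≤ S := by positivity
  calc z = z * (‖k.1‖ + k.2) := by rw [hsum, mul_one]
    _ ≤ z * (S + t * k.2 * ‖y‖ + k.2) := by gcongr
    _ = S * z + (k.2 * z) * (1 + t * ‖y‖) := by ring
    _ ≤ S * (1 + t * ‖y‖) + S * (1 + t * ‖y‖) := by
      gcongr
      have : 0 ≤ k.2 * z := by positivity
      linarith
    _ = S * (2 * (1 + t * ‖y‖)) := by ring

theorem abs_movingPlaneKernel_le (hp : p ≠ 0) (he : ‖e‖ = 1) (hk : k ∈ movingPlaneParams e)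
    (ht : 0 ≤ t) (y : E) :
    |movingPlaneKernel p e k t y| ≤ p * (2 * (1 + t * ‖y‖)) ^ p := by
  calc |movingPlaneKernel p e k t y|
      ≤ p * (‖planeReflection e k.2 k.1 - (t * k.2) • y‖ + ‖k.1 - (t * k.2) • y‖) ^ (p - 1) *
          (2 * (1 + t * ‖y‖)) :=
        abs_powDiffQuot_mul_le p (norm_nonneg _) (norm_nonneg _) (by positivity)
          (abs_one_sub_mul_inner_le he hk ht y)
    _ ≤ p * (2 * (1 + t * ‖y‖)) ^ (p - 1) * (2 * (1 + t * ‖y‖)) := by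
        gcongr
        exact norm_add_norm_le_of_mem_movingPlaneParams he hk ht y
    _ = p * (2 * (1 + t * ‖y‖)) ^ p := by rw [mul_assoc, pow_sub_one_mul hp]

theorem norm_movingPlaneKernel_mul_le (hp : p ≠ 0) (he : ‖e‖ = 1) (hk : k ∈ movingPlaneParams e)
    {T : ℝ} (ht : t ∈ Icc 0 T) (f : E → ℝ) (y : E) :
    ‖movingPlaneKernel p e k t y * f y‖ ≤ p * (2 * (1 + T)) ^ p * ‖(1 + ‖y‖) ^ p * f y‖ := by
  obtain ⟨ht0, htT⟩ := ht
  have hlin : 2 * (1 + t * ‖y‖) ≤ 2 * (1 + T) * (1 + ‖y‖) := by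
    nlinarith [norm_nonneg y, mul_le_mul_of_nonneg_right htT (norm_nonneg y)]
  calc ‖movingPlaneKernel p e k t y * f y‖ ≤ p * (2 * (1 + t * ‖y‖)) ^ p * ‖f y‖ := by
        rw [norm_mul]
        gcongr
        exact abs_movingPlaneKernel_le hp he hk ht0 y
    _ ≤ p * (2 * (1 + T) * (1 + ‖y‖)) ^ p * ‖f y‖ := by gcongr
    _ = p * (2 * (1 + T)) ^ p * ‖(1 + ‖y‖) ^ p * f y‖ := by
        rw [norm_mul, Real.norm_of_nonneg (by positivity : 0 ≤ (1 + ‖y‖) ^ p), mul_pow]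
        ring

theorem norm_add_norm_pos_of_mem_movingPlaneParams (he : ‖e‖ = 1) (hk : k ∈ movingPlaneParams e)
    (ht : 0 ≤ t) {y : E} (hy : t * ⟪y, e⟫ ≠ 1) :
    0 < ‖planeReflection e k.2 k.1 - (t * k.2) • y‖ + ‖k.1 - (t * k.2) • y‖ :=
  (mul_pos_iff_of_pos_right (by positivity)).1
    ((abs_pos.2 (sub_ne_zero.2 hy.symm)).trans_le (abs_one_sub_mul_inner_le he hk ht y))

theorem movingPlaneKernel_pos (hp : p ≠ 0) (he : ‖e‖ = 1) (hk : k ∈ movingPlaneParams e)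
    (ht : 0 ≤ t) {y : E} (hy : t * ⟪y, e⟫ < 1) : 0 < movingPlaneKernel p e k t y :=
  mul_pos (powDiffQuot_pos hp (norm_nonneg _) (norm_nonneg _)
    (norm_add_norm_pos_of_mem_movingPlaneParams he hk ht hy.ne)) (sub_pos.2 hy)

theorem measurable_movingPlaneKernel [MeasurableSpace E] [BorelSpace E]
    [SecondCountableTopology E] (p : ℕ) (e : E) (k : E × ℝ) (t : ℝ) :
    Measurable (movingPlaneKernel p e k t) := by
  have hnorms : Measurable fun y : E =>
      (‖planeReflection e k.2 k.1 - (t * k.2) • y‖, ‖k.1 - (t * k.2) • y‖) := by fun_prop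
  exact ((measurable_powDiffQuot p).comp hnorms).mul (by fun_prop)

theorem continuousAt_movingPlaneKernel (p : ℕ) (he : ‖e‖ = 1) (hk : k ∈ movingPlaneParams e)
    (ht : 0 ≤ t) {y : E} (hy : t * ⟪y, e⟫ ≠ 1) :
    ContinuousAt (fun q : (E × ℝ) × ℝ => movingPlaneKernel p e q.1 q.2 y) (k, t) := by
  have hnorms : ContinuousAt (fun q : (E × ℝ) × ℝ =>
      (‖planeReflection e q.1.2 q.1.1 - (q.2 * q.1.2) • y‖, ‖q.1.1 - (q.2 * q.1.2) • y‖))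
      (k, t) := by
    unfold planeReflection
    fun_prop
  have hquot := (continuousAt_powDiffQuot p
    (norm_add_norm_pos_of_mem_movingPlaneParams he hk ht hy).ne').comp_of_eq hnorms rfl
  exact hquot.mul (by fun_prop)

end MovingPlaneKernel

theorem integral_pos_of_ae_pos {X : Type*} [MeasurableSpace X] {μ : Measure X} [NeZero μ]
    {g : X → ℝ} (hg : Integrable g μ) (hpos : ∀ᵐ y ∂μ, 0 < g y) : 0 < ∫ y, g y ∂μ := by
  have hnonneg : 0 ≤ᵐ[μ] g := hpos.mono fun _ h => h.le
  refine (integral_nonneg_of_ae hnonneg).lt_of_ne' fun hzero => ?_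
  obtain ⟨y, hy, hy0⟩ :=
    (hpos.and ((integral_eq_zero_iff_of_nonneg_ae hnonneg hg).1 hzero)).exists
  exact hy.ne' hy0

/- A method of continuity: at the first `t` where positivity fails, `F · t` is still nonnegative. -/
theorem pos_of_continuousOn_prod_Icc {X : Type*} [TopologicalSpace X] [T2Space X] {K : Set X}
    (hK : IsCompact K) {T : ℝ} {F : X → ℝ → ℝ}
    (hF : ContinuousOn (fun q : X × ℝ => F q.1 q.2) (K ×ˢ Icc 0 T)) (h0 : ∀ k ∈ K, 0 ≤ F k 0)
    (hstrict : ∀ t ∈ Icc 0 T, (∀ k ∈ K, 0 ≤ F k t) → ∀ k ∈ K, 0 < F k t) :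
    ∀ t ∈ Icc 0 T, ∀ k ∈ K, 0 < F k t := by
  by_contra! ⟨t₁, ht₁, k₁, hk₁, hF₁⟩
  have hcompact : IsCompact (K ×ˢ Icc 0 T ∩ (fun q : X × ℝ => F q.1 q.2) ⁻¹' Iic 0) :=
    (hK.prod isCompact_Icc).of_isClosed_subset
      (hF.preimage_isClosed_of_isClosed (hK.isClosed.prod isClosed_Icc) isClosed_Iic)
      inter_subset_left
  obtain ⟨⟨k₀, t₀⟩, ⟨⟨hk₀, ht₀⟩, hF₀⟩, hmin⟩ :=
    hcompact.exists_isMinOn ⟨(k₁, t₁), ⟨hk₁, ht₁⟩, hF₁⟩ continuousOn_snd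
  have hbefore : ∀ k ∈ K, ∀ t ∈ Ico 0 t₀, 0 < F k t := by
    intro k hk t ht
    by_contra! hle
    exact ht.2.not_ge (hmin (a := (k, t)) ⟨⟨hk, ht.1, ht.2.le.trans ht₀.2⟩, hle⟩)
  refine (hstrict t₀ ht₀ (fun k hk => ?_) k₀ hk₀).not_ge hF₀
  rcases ht₀.1.eq_or_lt with h | hpos
  · exact h ▸ h0 k hk
  have hcont : ContinuousOn (F k) (Icc 0 T) :=
    hF.comp (f := fun t => (k, t)) (by fun_prop) fun t ht => ⟨hk, ht⟩
  have hclosure : t₀ ∈ closure (Ico 0 t₀) := by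
    rw [closure_Ico hpos.ne]
    exact right_mem_Icc.2 hpos.le
  exact continuousWithinAt_const.closure_le hclosure
    ((hcont t₀ ht₀).mono (Ico_subset_Icc_self.trans (Icc_subset_Icc_right ht₀.2)))
    fun t ht => (hbefore k hk t ht).le

theorem norm_sub_pow_le {E : Type*} [SeminormedAddCommGroup E] (p : ℕ) (x y : E) :
    ‖x - y‖ ^ p ≤ (1 + ‖x‖) ^ p * (1 + ‖y‖) ^ p := by
  rw [← mul_pow]
  gcongr
  nlinarith [norm_sub_le x y, norm_nonneg x, norm_nonneg y]

section MovingPlanes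

variable {E : Type*} [NormedAddCommGroup E] [InnerProductSpace ℝ E] [FiniteDimensional ℝ E]
  [MeasurableSpace E] [BorelSpace E] {p : ℕ} {e : E} {f : E → ℝ} {k : E × ℝ} {t : ℝ}

theorem ae_inner_ne {c : ℝ} (hc : c ≠ 0) (v : E) : ∀ᵐ y : E, ⟪y, v⟫ ≠ c := by
  let s : AffineSubspace ℝ E :=
    { carrier := {y | ⟪y, v⟫ = c}
      smul_vsub_vadd_mem' := by
        intro a x y z (hx : ⟪x, v⟫ = c) (hy : ⟪y, v⟫ = c) (hz : ⟪z, v⟫ = c)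
        simp [inner_add_left, inner_sub_left, inner_smul_left, hx, hy, hz] }
  have hs : s ≠ ⊤ := by
    intro h
    have h0 : (0 : E) ∈ s := h ▸ AffineSubspace.mem_top ℝ E 0
    exact hc ((show ⟪(0 : E), v⟫ = c from h0).symm.trans (inner_zero_left v))
  exact measure_eq_zero_iff_ae_notMem.1 (Measure.addHaar_affineSubspace volume s hs)

/-- The potential `∫ ‖x - y‖ ^ p * f y` of the density `f`. -/
noncomputable def powPotential (p : ℕ) (f : E → ℝ) (x : E) : ℝ := ∫ y, ‖x - y‖ ^ p * f y

/-- The integral of `f` against `movingPlaneKernel`: up to a positive factor, the increment of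
`powPotential p f` under the reflection in a hyperplane. -/
noncomputable def movingPlaneIntegral (p : ℕ) (e : E) (f : E → ℝ) (k : E × ℝ) (t : ℝ) : ℝ :=
  ∫ y, movingPlaneKernel p e k t y * f y

theorem aestronglyMeasurable_of_integrable_one_add_norm_pow_mul
    (hf : Integrable fun y => (1 + ‖y‖) ^ p * f y) : AEStronglyMeasurable f := by
  have hcont : Continuous fun y : E => ((1 + ‖y‖) ^ p)⁻¹ := by
    fun_prop (disch := intro; positivity)
  refine (hcont.aestronglyMeasurable.mul hf.aestronglyMeasurable).congr (.of_forall fun y => ?_)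
  exact inv_mul_cancel_left₀ (by positivity) _

theorem integrable_norm_sub_pow_mul (hf : Integrable fun y => (1 + ‖y‖) ^ p * f y) (x : E) :
    Integrable fun y => ‖x - y‖ ^ p * f y := by
  have hf_meas := aestronglyMeasurable_of_integrable_one_add_norm_pow_mul hf
  have hkernel : Continuous fun y : E => ‖x - y‖ ^ p := by fun_prop
  refine (hf.const_mul ((1 + ‖x‖) ^ p)).mono (hkernel.aestronglyMeasurable.mul hf_meas)
    (.of_forall fun y => ?_)
  rw [← mul_assoc, norm_mul, norm_mul, Real.norm_of_nonneg (by positivity : 0 ≤ ‖x - y‖ ^ p),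
    Real.norm_of_nonneg (by positivity : 0 ≤ (1 + ‖x‖) ^ p * (1 + ‖y‖) ^ p)]
  gcongr
  exact norm_sub_pow_le p x y

theorem continuous_powPotential (hf : Integrable fun y => (1 + ‖y‖) ^ p * f y) :
    Continuous (powPotential p f) := by
  refine continuous_iff_continuousAt.2 fun x₀ => continuousAt_of_dominated
    (bound := fun y => (2 + ‖x₀‖) ^ p * ‖(1 + ‖y‖) ^ p * f y‖)
    (.of_forall fun x => (integrable_norm_sub_pow_mul hf x).aestronglyMeasurable) ?_
    (hf.norm.const_mul _) (.of_forall fun y => by fun_prop)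
  filter_upwards [Metric.ball_mem_nhds x₀ one_pos] with x hx
  refine .of_forall fun y => ?_
  have hx_norm : 1 + ‖x‖ ≤ 2 + ‖x₀‖ := by
    linarith [norm_le_norm_add_norm_sub' x x₀, mem_ball_iff_norm.1 hx]
  rw [norm_mul, norm_mul, ← mul_assoc, Real.norm_of_nonneg (by positivity : 0 ≤ (1 + ‖y‖) ^ p),
    Real.norm_of_nonneg (by positivity)]
  gcongr
  exact (norm_sub_pow_le p x y).trans (by gcongr)

theorem powPotential_pos [Nontrivial E] (hf : Integrable fun y => (1 + ‖y‖) ^ p * f y)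
    (hpos : ∀ᵐ y, 0 < f y) (x : E) : 0 < powPotential p f x := by
  refine integral_pos_of_ae_pos (integrable_norm_sub_pow_mul hf x) ?_
  filter_upwards [hpos, Measure.ae_ne volume x] with y hy hne
  have := norm_sub_pos_iff.2 hne.symm
  positivity

theorem aestronglyMeasurable_movingPlaneKernel_mul
    (hf : Integrable fun y => (1 + ‖y‖) ^ p * f y) (e : E) (k : E × ℝ) (t : ℝ) :
    AEStronglyMeasurable fun y => movingPlaneKernel p e k t y * f y :=
  (measurable_movingPlaneKernel p e k t).aestronglyMeasurable.mul
    (aestronglyMeasurable_of_integrable_one_add_norm_pow_mul hf)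

theorem integrable_movingPlaneKernel_mul (hp : p ≠ 0) (he : ‖e‖ = 1)
    (hf : Integrable fun y => (1 + ‖y‖) ^ p * f y) (hk : k ∈ movingPlaneParams e) (ht : 0 ≤ t) :
    Integrable fun y => movingPlaneKernel p e k t y * f y :=
  (hf.norm.const_mul _).mono' (aestronglyMeasurable_movingPlaneKernel_mul hf e k t)
    (.of_forall (norm_movingPlaneKernel_mul_le hp he hk ⟨ht, le_rfl⟩ f))

theorem continuousOn_movingPlaneIntegral (hp : p ≠ 0) (he : ‖e‖ = 1)
    (hf : Integrable fun y => (1 + ‖y‖) ^ p * f y) (T : ℝ) :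
    ContinuousOn (fun q : (E × ℝ) × ℝ => movingPlaneIntegral p e f q.1 q.2)
      (movingPlaneParams e ×ˢ Icc 0 T) := by
  rintro ⟨k, t⟩ ⟨hk, ht⟩
  refine continuousWithinAt_of_dominated
    (.of_forall fun q => aestronglyMeasurable_movingPlaneKernel_mul hf e q.1 q.2)
    (eventually_mem_nhdsWithin.mono fun q hq =>
      .of_forall (norm_movingPlaneKernel_mul_le hp he hq.1 hq.2 f))
    (hf.norm.const_mul _) ?_
  filter_upwards [ae_inner_ne one_ne_zero (t • e)] with y hy
  rw [inner_smul_right] at hy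
  exact ((continuousAt_movingPlaneKernel p he hk ht.1 hy).mul continuousAt_const).continuousWithinAt

theorem powPotential_planeReflection_sub (he : ‖e‖ = 1)
    (hf : Integrable fun y => (1 + ‖y‖) ^ p * f y) {l R : ℝ} (hl : l ≠ 0) (hR : 0 < R) (x : E) :
    powPotential p f (planeReflection e l x) - powPotential p f x =
      R ^ p / R ^ 2 * (4 * (l - ⟪x, e⟫) * l) *
        movingPlaneIntegral p e f (R⁻¹ • (x, l)) l⁻¹ := by
  rw [powPotential, powPotential,
    ← integral_sub (integrable_norm_sub_pow_mul hf _) (integrable_norm_sub_pow_mul hf _),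
    movingPlaneIntegral, ← integral_const_mul]
  refine integral_congr_ae (.of_forall fun y => ?_)
  simp only [← sub_mul, norm_pow_sub_norm_pow_eq_mul_movingPlaneKernel p he hl hR, mul_assoc]

theorem movingPlaneIntegral_zero_pos (hp : p ≠ 0) (he : ‖e‖ = 1)
    (hf : Integrable fun y => (1 + ‖y‖) ^ p * f y) (hpos : ∀ᵐ y, 0 < f y)
    (hk : k ∈ movingPlaneParams e) : 0 < movingPlaneIntegral p e f k 0 := by
  refine integral_pos_of_ae_pos (integrable_movingPlaneKernel_mul hp he hf hk le_rfl) ?_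
  filter_upwards [hpos] with y hy
  exact mul_pos (movingPlaneKernel_pos hp he hk le_rfl (by rw [zero_mul]; exact one_pos)) hy

theorem powPotential_le_planeReflection_of_movingPlaneIntegral_nonneg (he : ‖e‖ = 1)
    (hf : Integrable fun y => (1 + ‖y‖) ^ p * f y) {l : ℝ} (hl : 0 < l)
    (hnonneg : ∀ k ∈ movingPlaneParams e, 0 ≤ movingPlaneIntegral p e f k l⁻¹) {x : E}
    (hx : ⟪x, e⟫ ≤ l) : powPotential p f x ≤ powPotential p f (planeReflection e l x) := by
  have hR : 0 < l + ‖x‖ := by positivity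
  have hI := hnonneg _ (inv_smul_mem_movingPlaneParams hl hx)
  have := sub_nonneg.2 hx
  rw [← sub_nonneg, powPotential_planeReflection_sub he hf hl.ne' hR]
  positivity

theorem movingPlaneIntegral_pos_of_ae_pos (hp : p ≠ 0) (he : ‖e‖ = 1)
    (hf : Integrable fun y => (1 + ‖y‖) ^ p * f y) (hk : k ∈ movingPlaneParams e) (ht : 0 < t)
    (hpos : ∀ᵐ y, 0 < movingPlaneKernel p e k t y * (f y - f (planeReflection e t⁻¹ y))) :
    0 < movingPlaneIntegral p e f k t := by
  set g : E → ℝ := fun y => movingPlaneKernel p e k t y * f y with hg_def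
  have hg : Integrable g := integrable_movingPlaneKernel_mul hp he hf hk ht.le
  have hρ := measurePreserving_planeReflection he t⁻¹
  have hg_comp : Integrable fun y => g (planeReflection e t⁻¹ y) :=
    hρ.integrable_comp_of_integrable hg
  have hsum : 0 < ∫ y, (g y + g (planeReflection e t⁻¹ y)) := by
    refine integral_pos_of_ae_pos (hg.add hg_comp) (hpos.mono fun y hy => ?_)
    rw [hg_def]
    simp only [movingPlaneKernel_planeReflection p he k ht.ne']
    linarith
  rw [integral_add hg hg_comp, hρ.integral_comp
    (isometry_planeReflection he _).isClosedEmbedding.measurableEmbedding, ← two_mul] at hsum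
  exact pos_of_mul_pos_right hsum zero_le_two

/-- `f` is a positive density solving `f y = Φ ‖y‖ (∫ ‖y - z‖ ^ p * f z)` with a nonlinearity `Φ`
that is strictly decreasing in its first and decreasing in its second variable: the equation to
which the moving plane method applies. -/
structure IsPotentialSolution (p : ℕ) (Φ : ℝ → ℝ → ℝ) (f : E → ℝ) : Prop where
  integrable : Integrable fun y => (1 + ‖y‖) ^ p * f y
  pos : ∀ᵐ y, 0 < f y
  eq : ∀ᵐ y, f y = Φ ‖y‖ (powPotential p f y)
  lt : ∀ ⦃r s v w⦄, 0 ≤ r → r < s → 0 < v → v ≤ w → Φ s w < Φ r v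

namespace IsPotentialSolution

variable {Φ : ℝ → ℝ → ℝ}

theorem ae_planeReflection_lt [Nontrivial E] (h : IsPotentialSolution p Φ f) (he : ‖e‖ = 1) {l : ℝ}
    (hl : 0 < l) (hle : ∀ x, ⟪x, e⟫ ≤ l →
      powPotential p f x ≤ powPotential p f (planeReflection e l x)) :
    ∀ᵐ y, ⟪y, e⟫ < l → f (planeReflection e l y) < f y := by
  filter_upwards [h.eq,
    (measurePreserving_planeReflection he l).quasiMeasurePreserving.ae h.eq] with y hy hρy hyl
  rw [hy, hρy]
  exact h.lt (norm_nonneg _) (norm_lt_norm_planeReflection he hl hyl)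
    (powPotential_pos h.integrable h.pos y) (hle y hyl.le)

theorem movingPlaneIntegral_pos_of_nonneg [Nontrivial E] (h : IsPotentialSolution p Φ f)
    (hp : p ≠ 0) (he : ‖e‖ = 1) (ht : 0 < t)
    (hnonneg : ∀ k ∈ movingPlaneParams e, 0 ≤ movingPlaneIntegral p e f k t)
    (hk : k ∈ movingPlaneParams e) : 0 < movingPlaneIntegral p e f k t := by
  have hl : 0 < t⁻¹ := inv_pos.2 ht
  have hlt := h.ae_planeReflection_lt he hl fun x hx =>
    powPotential_le_planeReflection_of_movingPlaneIntegral_nonneg he h.integrable hl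
      (by rwa [inv_inv]) hx
  have hbelow : ∀ y, ⟪y, e⟫ < t⁻¹ → f (planeReflection e t⁻¹ y) < f y →
      0 < movingPlaneKernel p e k t y * (f y - f (planeReflection e t⁻¹ y)) := fun y hy hfy =>
    mul_pos (movingPlaneKernel_pos hp he hk ht.le ((lt_inv_mul_iff₀ ht).1 (by rwa [mul_one])))
      (sub_pos.2 hfy)
  refine movingPlaneIntegral_pos_of_ae_pos hp he h.integrable hk ht ?_
  filter_upwards [hlt, (measurePreserving_planeReflection he t⁻¹).quasiMeasurePreserving.ae hlt,
    ae_inner_ne hl.ne' e] with y hy hρy hne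
  rcases hne.lt_or_gt with hyl | hyl
  · exact hbelow y hyl (hy hyl)
  · have hρl : ⟪planeReflection e t⁻¹ y, e⟫ < t⁻¹ := by
      rw [inner_planeReflection he]
      linarith
    have hρ := hbelow _ hρl (hρy hρl)
    rw [movingPlaneKernel_planeReflection p he k ht.ne', planeReflection_planeReflection he] at hρ
    linarith

theorem movingPlaneIntegral_pos [Nontrivial E] (h : IsPotentialSolution p Φ f) (hp : p ≠ 0)
    (he : ‖e‖ = 1) (hk : k ∈ movingPlaneParams e) (ht : 0 ≤ t) :
    0 < movingPlaneIntegral p e f k t := by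
  have hzero : ∀ k ∈ movingPlaneParams e, 0 < movingPlaneIntegral p e f k 0 := fun k hk =>
    movingPlaneIntegral_zero_pos hp he h.integrable h.pos hk
  refine pos_of_continuousOn_prod_Icc (isCompact_movingPlaneParams e)
    (continuousOn_movingPlaneIntegral hp he h.integrable t) (fun k hk => (hzero k hk).le)
    (fun s hs hnonneg k hk => ?_) t ⟨ht, le_rfl⟩ k hk
  rcases hs.1.eq_or_lt with rfl | hspos
  · exact hzero k hk
  · exact h.movingPlaneIntegral_pos_of_nonneg hp he hspos hnonneg hk

theorem powPotential_le_planeReflection [Nontrivial E] (h : IsPotentialSolution p Φ f)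
    (hp : p ≠ 0) (he : ‖e‖ = 1) {x : E} (hx : ⟪x, e⟫ ≤ 0) :
    powPotential p f x ≤ powPotential p f (planeReflection e 0 x) := by
  have hcont : Continuous fun l => powPotential p f (planeReflection e l x) :=
    (continuous_powPotential h.integrable).comp (by unfold planeReflection; fun_prop)
  refine ge_of_tendsto (hcont.continuousWithinAt (s := Ioi 0)).tendsto ?_
  filter_upwards [self_mem_nhdsWithin] with l (hl : 0 < l)
  exact powPotential_le_planeReflection_of_movingPlaneIntegral_nonneg he h.integrable hl
    (fun k hk => (h.movingPlaneIntegral_pos hp he hk (inv_nonneg.2 hl.le)).le) (hx.trans hl.le)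

theorem powPotential_eq_of_norm_eq [Nontrivial E] (h : IsPotentialSolution p Φ f) (hp : p ≠ 0)
    {x y : E} (hxy : ‖x‖ = ‖y‖) : powPotential p f x = powPotential p f y := by
  rcases eq_or_ne x y with rfl | hne
  · rfl
  wlog hle : powPotential p f y ≤ powPotential p f x generalizing x y
  · exact (this hxy.symm hne.symm (le_of_not_ge hle)).symm
  refine hle.antisymm' ?_
  set e := ‖y - x‖⁻¹ • (y - x)
  have he : ‖e‖ = 1 := norm_smul_inv_norm (𝕜 := ℝ) (sub_ne_zero.2 hne.symm)
  have hinner : ⟪x, e⟫ ≤ 0 := by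
    rw [inner_smul_right, inner_sub_right, real_inner_self_eq_norm_sq]
    refine mul_nonpos_of_nonneg_of_nonpos (by positivity) (sub_nonpos.2 ?_)
    simpa only [hxy, sq] using real_inner_le_norm x y
  calc powPotential p f x ≤ powPotential p f (planeReflection e 0 x) :=
        h.powPotential_le_planeReflection hp he hinner
    _ = powPotential p f (planeReflection e 0 (planeReflection e 0 y)) := by
        rw [planeReflection_normalize_sub hne.symm hxy.symm]
    _ = powPotential p f y := by rw [planeReflection_planeReflection he]

end IsPotentialSolution

end MovingPlanes

section Kelvin

variable {E : Type*} [NormedAddCommGroup E] [InnerProductSpace ℝ E] {p : ℕ} {a : E} {r : ℝ}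

theorem one_add_norm_inversion_sq (hr : r ^ 2 = 1 + ‖a‖ ^ 2) {y : E} (hy : y ≠ a) :
    1 + ‖inversion a r y‖ ^ 2 = (1 + ‖y‖ ^ 2) / (‖y - a‖ / r) ^ 2 := by
  have hne : ‖y - a‖ ≠ 0 := norm_ne_zero_iff.2 (sub_ne_zero.2 hy)
  have hnorm : ‖y‖ ^ 2 = ‖y - a‖ ^ 2 + 2 * ⟪y - a, a⟫ + ‖a‖ ^ 2 := by
    rw [← norm_add_sq_real, sub_add_cancel]
  have hinv : ‖inversion a r y‖ ^ 2 = (r ^ 2 / ‖y - a‖ ^ 2) ^ 2 * ‖y - a‖ ^ 2 +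
      2 * (r ^ 2 / ‖y - a‖ ^ 2 * ⟪y - a, a⟫) + ‖a‖ ^ 2 := by
    rw [inversion, vsub_eq_sub, vadd_eq_add, dist_eq_norm, norm_add_sq_real, norm_smul,
      inner_smul_left, conj_trivial, mul_pow, Real.norm_eq_abs, sq_abs, div_pow]
  simp only [hinv, div_pow, hnorm, hr]
  field_simp
  ring

variable [FiniteDimensional ℝ E]

theorem abs_det_smul_reflection (c : ℝ) (K : Submodule ℝ E) :
    |(c • (K.reflection : E →L[ℝ] E)).det| = |c| ^ Module.finrank ℝ E := by
  have hdet : (K.reflection : E →L[ℝ] E).det = (-1) ^ Module.finrank ℝ Kᗮ :=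
    Submodule.det_reflection K
  rw [ContinuousLinearMap.det] at hdet ⊢
  rw [ContinuousLinearMap.toLinearMap_smul, LinearMap.det_smul, hdet]
  simp

variable [MeasurableSpace E] [BorelSpace E] {f : E → ℝ}

theorem integral_comp_inversion [Nontrivial E] (a : E) (hr : r ≠ 0) (g : E → ℝ) :
    ∫ y, (r / ‖y - a‖) ^ (2 * Module.finrank ℝ E) * g (inversion a r y) = ∫ z, g z := by
  have himage : inversion a r '' {a}ᶜ = {a}ᶜ := by
    have h := image_compl_eq (inversion_bijective a hr) (s := {a})
    rwa [image_singleton, inversion_self] at h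
  have hrestrict : (volume : Measure E).restrict {a}ᶜ = volume :=
    Measure.restrict_eq_self_of_ae_mem (Measure.ae_ne volume a)
  have h := integral_image_eq_integral_abs_det_fderiv_smul (volume : Measure E)
    (measurableSet_singleton a).compl
    (fun x hx => (hasFDerivAt_inversion (R := r) hx).hasFDerivWithinAt)
    (inversion_injective a hr).injOn g
  rw [himage, hrestrict] at h
  rw [h]
  refine integral_congr_ae (.of_forall fun y => ?_)
  simp only [smul_eq_mul, abs_det_smul_reflection, dist_eq_norm, abs_sq, pow_mul]

/-- The Kelvin transform of a density, with respect to the sphere of centre `a` and radius `r`: the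
weight is such that `powPotential p` of it is the Kelvin transform of `powPotential p f`. -/
noncomputable def kelvinDensity (p : ℕ) (a : E) (r : ℝ) (f : E → ℝ) (y : E) : ℝ :=
  (r / ‖y - a‖) ^ (p + 2 * Module.finrank ℝ E) * f (inversion a r y)

theorem powPotential_kelvinDensity [Nontrivial E] (p : ℕ) (f : E → ℝ) (hr : r ≠ 0) {x : E}
    (hx : x ≠ a) :
    powPotential p (kelvinDensity p a r f) x =
      (‖x - a‖ / r) ^ p * powPotential p f (inversion a r x) := by
  rw [powPotential, powPotential,
    ← integral_comp_inversion a hr fun z => ‖inversion a r x - z‖ ^ p * f z, ← integral_const_mul]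
  refine integral_congr_ae ?_
  filter_upwards [Measure.ae_ne volume a] with y hy
  have hxa : ‖x - a‖ ≠ 0 := norm_ne_zero_iff.2 (sub_ne_zero.2 hx)
  have hya : ‖y - a‖ ≠ 0 := norm_ne_zero_iff.2 (sub_ne_zero.2 hy)
  have hdist : ‖inversion a r x - inversion a r y‖ = r ^ 2 / (‖x - a‖ * ‖y - a‖) * ‖x - y‖ := by
    simpa only [dist_eq_norm] using dist_inversion_inversion hx hy r
  have hkernel : ‖x - y‖ ^ p * (r / ‖y - a‖) ^ p =
      (‖x - a‖ / r) ^ p * ‖inversion a r x - inversion a r y‖ ^ p := by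
    rw [← mul_pow, ← mul_pow, hdist]
    congr 1
    field_simp
  rw [kelvinDensity, pow_add]
  linear_combination ((r / ‖y - a‖) ^ (2 * Module.finrank ℝ E) * f (inversion a r y)) * hkernel

end Kelvin

section Conformal

variable {p N : ℕ} {σ α γ : ℝ}

/-- The nonlinearity `(2 / (1 + r ^ 2)) ^ σ * u ^ (-α)` at `u = γ * w`, where `w` is the value of a
potential at a point of norm `r`. -/
noncomputable def conformalNonlinearity (σ α γ r w : ℝ) : ℝ :=
  (2 / (1 + r ^ 2)) ^ σ * (γ * w) ^ (-α)

theorem conformalNonlinearity_pos {w : ℝ} (σ α r : ℝ) (hγ : 0 < γ) (hw : 0 < w) :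
    0 < conformalNonlinearity σ α γ r w := by
  unfold conformalNonlinearity
  positivity

theorem conformalNonlinearity_lt (hσ : 0 < σ) (hα : 0 ≤ α) (hγ : 0 < γ) {r s v w : ℝ}
    (hr : 0 ≤ r) (hrs : r < s) (hv : 0 < v) (hvw : v ≤ w) :
    conformalNonlinearity σ α γ s w < conformalNonlinearity σ α γ r v := by
  have hw : 0 < w := hv.trans_le hvw
  unfold conformalNonlinearity
  refine mul_lt_mul ?_ ?_ (by positivity) (by positivity)
  · gcongr
  · exact Real.rpow_le_rpow_of_nonpos (by positivity) (by gcongr) (neg_nonpos.2 hα)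

theorem inv_pow_mul_conformalNonlinearity (hσ : 2 * σ + α * p = N) (hγ : 0 < γ) {q r s w : ℝ}
    (hq : 0 < q) (hw : 0 < w) (hrs : 1 + r ^ 2 = (1 + s ^ 2) / q ^ 2) :
    q⁻¹ ^ N * conformalNonlinearity σ α γ r w = conformalNonlinearity σ α γ s (q ^ p * w) := by
  have hexp : q⁻¹ ^ N * (q ^ 2) ^ σ = (q ^ p) ^ (-α) := by
    rw [← Real.rpow_natCast q 2, ← Real.rpow_mul hq.le, inv_pow, ← Real.rpow_natCast q,
      ← Real.rpow_neg hq.le, ← Real.rpow_add hq, ← Real.rpow_natCast q p, ← Real.rpow_mul hq.le]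
    congr 1
    push_cast
    linarith
  have hfactor : 2 / ((1 + s ^ 2) / q ^ 2) = 2 / (1 + s ^ 2) * q ^ 2 := by field_simp
  rw [conformalNonlinearity, conformalNonlinearity, hrs, hfactor, mul_left_comm γ,
    Real.mul_rpow (pow_nonneg hq.le p) (mul_pos hγ hw).le, ← hexp,
    Real.mul_rpow (by positivity) (by positivity)]
  ring

end Conformal

section Liouville

variable {E : Type*} [NormedAddCommGroup E] {p : ℕ}

theorem one_add_norm_pow_le_of_ne (p : ℕ) {x₁ x₂ : E} (hne : x₁ ≠ x₂) (y : E) :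
    (1 + ‖y‖) ^ p ≤ ((1 + ‖x₁‖) / ‖x₁ - x₂‖ + 1) ^ p * 2 ^ (p - 1) *
      (‖x₁ - y‖ ^ p + ‖x₂ - y‖ ^ p) := by
  have hδ : 0 < ‖x₁ - x₂‖ := norm_sub_pos_iff.2 hne
  have hδ_le : ‖x₁ - x₂‖ ≤ ‖x₁ - y‖ + ‖x₂ - y‖ := by
    simpa only [norm_sub_rev y x₂] using norm_sub_le_norm_sub_add_norm_sub x₁ y x₂
  have hlin : 1 + ‖y‖ ≤ ((1 + ‖x₁‖) / ‖x₁ - x₂‖ + 1) * (‖x₁ - y‖ + ‖x₂ - y‖) := by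
    calc 1 + ‖y‖ ≤ (1 + ‖x₁‖) / ‖x₁ - x₂‖ * ‖x₁ - x₂‖ + ‖x₁ - y‖ := by
          rw [div_mul_cancel₀ _ hδ.ne']
          linarith [norm_le_norm_add_norm_sub x₁ y]
      _ ≤ (1 + ‖x₁‖) / ‖x₁ - x₂‖ * (‖x₁ - y‖ + ‖x₂ - y‖) + (‖x₁ - y‖ + ‖x₂ - y‖) := by
          gcongr
          exact le_add_of_nonneg_right (norm_nonneg _)
      _ = ((1 + ‖x₁‖) / ‖x₁ - x₂‖ + 1) * (‖x₁ - y‖ + ‖x₂ - y‖) := by ring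
  calc (1 + ‖y‖) ^ p ≤ (((1 + ‖x₁‖) / ‖x₁ - x₂‖ + 1) * (‖x₁ - y‖ + ‖x₂ - y‖)) ^ p := by gcongr
    _ ≤ ((1 + ‖x₁‖) / ‖x₁ - x₂‖ + 1) ^ p *
          (2 ^ (p - 1) * (‖x₁ - y‖ ^ p + ‖x₂ - y‖ ^ p)) := by
        rw [mul_pow]
        gcongr
        exact add_pow_le (norm_nonneg _) (norm_nonneg _) p
    _ = _ := by ring

theorem integrable_one_add_norm_pow_mul_of_ne [MeasurableSpace E] [BorelSpace E]
    [SecondCountableTopology E] {μ : Measure E} {f : E → ℝ} {x₁ x₂ : E} (hne : x₁ ≠ x₂)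
    (h₁ : Integrable (fun y => ‖x₁ - y‖ ^ p * f y) μ)
    (h₂ : Integrable (fun y => ‖x₂ - y‖ ^ p * f y) μ) :
    Integrable (fun y => (1 + ‖y‖) ^ p * f y) μ := by
  set C := ((1 + ‖x₁‖) / ‖x₁ - x₂‖ + 1) ^ p * 2 ^ (p - 1)
  have hle : ∀ y, (1 + ‖y‖) ^ p ≤ C * (‖x₁ - y‖ ^ p + ‖x₂ - y‖ ^ p) :=
    one_add_norm_pow_le_of_ne p hne
  have hpos : ∀ y, 0 < ‖x₁ - y‖ ^ p + ‖x₂ - y‖ ^ p := fun y =>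
    pos_of_mul_pos_right ((by positivity : 0 < (1 + ‖y‖) ^ p).trans_le (hle y)) (by positivity)
  have hmeas : Measurable fun y => (1 + ‖y‖) ^ p / (‖x₁ - y‖ ^ p + ‖x₂ - y‖ ^ p) := by fun_prop
  refine ((h₁.add h₂).bdd_mul (c := C) hmeas.aestronglyMeasurable
    (.of_forall fun y => ?_)).congr (.of_forall fun y => ?_)
  · rw [Real.norm_of_nonneg (by positivity)]
    exact (div_le_iff₀ (hpos y)).2 (hle y)
  · simp only [Pi.add_apply, ← add_mul, ← mul_assoc, div_mul_cancel₀ _ (hpos y).ne']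

variable [InnerProductSpace ℝ E] [FiniteDimensional ℝ E] [MeasurableSpace E] [BorelSpace E]
  [Nontrivial E] {σ α γ r : ℝ} {a : E} {f : E → ℝ}

theorem powPotential_eq_powPotential_kelvinDensity_inversion (p : ℕ) (f : E → ℝ) (hr : r ≠ 0)
    {x : E} (hx : x ≠ a) :
    powPotential p f x =
      (‖x - a‖ / r) ^ p * powPotential p (kelvinDensity p a r f) (inversion a r x) := by
  have hxa : ‖x - a‖ ≠ 0 := norm_ne_zero_iff.2 (sub_ne_zero.2 hx)
  have hdist : ‖inversion a r x - a‖ = r ^ 2 / ‖x - a‖ := by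
    simpa only [dist_eq_norm] using dist_inversion_center a x r
  rw [powPotential_kelvinDensity p f hr ((inversion_eq_center hr).not.2 hx),
    inversion_inversion a hr, hdist, ← mul_assoc, ← mul_pow]
  field_simp
  simp

theorem powPotential_kelvinDensity_pos (hpos : ∀ x, 0 < powPotential p f x) (hr : 0 < r) {x : E}
    (hx : x ≠ a) : 0 < powPotential p (kelvinDensity p a r f) x := by
  have hxa : 0 < ‖x - a‖ := norm_sub_pos_iff.2 hx
  have := hpos (inversion a r x)
  rw [powPotential_kelvinDensity p f hr.ne' hx]
  positivity

theorem integrable_one_add_norm_pow_mul_kelvinDensity (hpos : ∀ x, 0 < powPotential p f x)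
    (hr : 0 < r) : Integrable fun y => (1 + ‖y‖) ^ p * kelvinDensity p a r f y := by
  obtain ⟨v, hv⟩ := exists_ne (0 : E)
  have hintegrable : ∀ w : E, w ≠ 0 →
      Integrable fun y => ‖a + w - y‖ ^ p * kelvinDensity p a r f y := fun w hw =>
    .of_integral_ne_zero (powPotential_kelvinDensity_pos hpos hr (by simpa using hw)).ne'
  have : IsAddTorsionFree E := .of_isTorsionFree ℝ E
  have hne : a + v ≠ a + -v := (add_right_injective a).ne (self_ne_neg.2 hv)
  exact integrable_one_add_norm_pow_mul_of_ne hne (hintegrable v hv)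
    (hintegrable (-v) (neg_ne_zero.2 hv))

theorem isPotentialSolution_kelvinDensity (hpos : ∀ x, 0 < powPotential p f x)
    (hf : ∀ y, f y = conformalNonlinearity σ α γ ‖y‖ (powPotential p f y)) (hσ : 0 < σ)
    (hα : 0 ≤ α) (hγ : 0 < γ) (hσα : 2 * σ + α * p = (p + 2 * Module.finrank ℝ E : ℕ))
    (hr : 0 < r) (hra : r ^ 2 = 1 + ‖a‖ ^ 2) :
    IsPotentialSolution p (conformalNonlinearity σ α γ) (kelvinDensity p a r f) where
  integrable := integrable_one_add_norm_pow_mul_kelvinDensity hpos hr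
  pos := by
    filter_upwards [Measure.ae_ne volume a] with y hy
    have hya : 0 < ‖y - a‖ := norm_sub_pos_iff.2 hy
    rw [kelvinDensity, hf]
    have := conformalNonlinearity_pos σ α ‖inversion a r y‖ hγ (hpos (inversion a r y))
    positivity
  eq := by
    filter_upwards [Measure.ae_ne volume a] with y hy
    have hya : 0 < ‖y - a‖ := norm_sub_pos_iff.2 hy
    rw [powPotential_kelvinDensity p f hr.ne' hy, kelvinDensity, hf, ← inv_div,
      inv_pow_mul_conformalNonlinearity hσα hγ (by positivity) (hpos _)
        (one_add_norm_inversion_sq hra hy)]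
  lt _ _ _ _ := conformalNonlinearity_lt hσ hα hγ

theorem norm_sub_pow_mul_powPotential_eq (hp : p ≠ 0) (hpos : ∀ x, 0 < powPotential p f x)
    (hf : ∀ y, f y = conformalNonlinearity σ α γ ‖y‖ (powPotential p f y)) (hσ : 0 < σ)
    (hα : 0 ≤ α) (hγ : 0 < γ) (hσα : 2 * σ + α * p = (p + 2 * Module.finrank ℝ E : ℕ)) {x y : E}
    (hx : x ≠ a) (hy : y ≠ a)
    (hxy : (1 + ‖x‖ ^ 2) * ‖y - a‖ ^ 2 = (1 + ‖y‖ ^ 2) * ‖x - a‖ ^ 2) :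
    ‖y - a‖ ^ p * powPotential p f x = ‖x - a‖ ^ p * powPotential p f y := by
  have hr : 0 < √(1 + ‖a‖ ^ 2) := by positivity
  have hra : √(1 + ‖a‖ ^ 2) ^ 2 = 1 + ‖a‖ ^ 2 := Real.sq_sqrt (by positivity)
  set r := √(1 + ‖a‖ ^ 2)
  have hnorm_sq : 1 + ‖inversion a r x‖ ^ 2 = 1 + ‖inversion a r y‖ ^ 2 := by
    have hxa : ‖x - a‖ ≠ 0 := norm_ne_zero_iff.2 (sub_ne_zero.2 hx)
    have hya : ‖y - a‖ ≠ 0 := norm_ne_zero_iff.2 (sub_ne_zero.2 hy)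
    rw [one_add_norm_inversion_sq hra hx, one_add_norm_inversion_sq hra hy, div_pow, div_pow]
    field_simp
    linear_combination hxy
  have hnorm : ‖inversion a r x‖ = ‖inversion a r y‖ := by
    rwa [add_right_inj, sq_eq_sq₀ (norm_nonneg _) (norm_nonneg _)] at hnorm_sq
  have hradial := (isPotentialSolution_kelvinDensity hpos hf hσ hα hγ hσα hr
    hra).powPotential_eq_of_norm_eq hp hnorm
  rw [powPotential_eq_powPotential_kelvinDensity_inversion p f hr.ne' hx, hradial,
    powPotential_eq_powPotential_kelvinDensity_inversion p f hr.ne' hy, div_pow, div_pow]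
  ring

theorem powPotential_eq_one_add_norm_sq_rpow_mul (hp : p ≠ 0)
    (hpos : ∀ x, 0 < powPotential p f x)
    (hf : ∀ y, f y = conformalNonlinearity σ α γ ‖y‖ (powPotential p f y)) (hσ : 0 < σ)
    (hα : 0 ≤ α) (hγ : 0 < γ) (hσα : 2 * σ + α * p = (p + 2 * Module.finrank ℝ E : ℕ)) (x : E) :
    powPotential p f x = (1 + ‖x‖ ^ 2) ^ ((p : ℝ) / 2) * powPotential p f 0 := by
  rcases eq_or_ne x 0 with rfl | hx
  · simp
  set w := √(1 + ‖x‖ ^ 2)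
  have hw : 0 < w := by positivity
  have hw_sq : w ^ 2 = 1 + ‖x‖ ^ 2 := Real.sq_sqrt (by positivity)
  have hw_pow : w ^ p = (1 + ‖x‖ ^ 2) ^ ((p : ℝ) / 2) := by
    rw [← hw_sq, ← Real.rpow_natCast w 2, ← Real.rpow_mul hw.le, Nat.cast_ofNat,
      mul_div_cancel₀ _ two_ne_zero, Real.rpow_natCast]
  -- The centre with `‖x - a‖ = w * ‖0 - a‖`, whose inversion takes `x` and `0` to equal norms.
  set a := (1 + w)⁻¹ • x
  have ha : a ≠ 0 := smul_ne_zero (by positivity) hx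
  have hxa : x - a = w • a := by
    have hx_eq : (1 + w) • a = x := smul_inv_smul₀ (by positivity) x
    rw [← hx_eq]
    module
  have hxa_norm : ‖x - a‖ = w * ‖0 - a‖ := by
    rw [hxa, norm_smul, Real.norm_of_nonneg hw.le, zero_sub, norm_neg]
  have hpot := norm_sub_pow_mul_powPotential_eq hp hpos hf hσ hα hγ hσα
    (sub_ne_zero.1 (hxa ▸ smul_ne_zero hw.ne' ha)) ha.symm
    (by rw [hxa_norm, ← hw_sq, norm_zero]; ring)
  have ha_pow : ‖0 - a‖ ^ p ≠ 0 := pow_ne_zero p (norm_ne_zero_iff.2 (sub_ne_zero.2 ha.symm))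
  refine mul_left_cancel₀ ha_pow ?_
  rw [hpot, hxa_norm, mul_pow, hw_pow]
  ring

theorem rpow_mul_const_mul_inv_rpow {w κ : ℝ} (hw : 0 < w) (hκ : 0 ≤ κ) (s q α : ℝ) :
    w ^ (s - α * q) * (κ * w⁻¹ ^ q) ^ (-α) = κ ^ (-α) * w ^ s := by
  rw [Real.inv_rpow hw.le, ← Real.rpow_neg hw.le, Real.mul_rpow hκ (by positivity),
    ← Real.rpow_mul hw.le, mul_left_comm, ← Real.rpow_add hw]
  ring_nf

theorem eq_one_of_eq_rpow_neg {κ : ℝ} (hκ : 0 < κ) (hα : 0 ≤ α) (h : κ = κ ^ (-α)) : κ = 1 := by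
  have hpow : κ ^ (1 + α) = 1 := by
    nth_rewrite 1 [Real.rpow_add hκ, Real.rpow_one, h]
    rw [← Real.rpow_add hκ, neg_add_cancel, Real.rpow_zero]
  exact (Real.rpow_left_inj hκ.le zero_le_one (by linarith)).1 (hpow.trans (Real.one_rpow _).symm)

theorem stmt12_general (hp : p ≠ 0) (hα : 0 ≤ α) (hαp : α * p < p + 2 * Module.finrank ℝ E)
    (hγ : 0 < γ)
    (hγeq : ∀ x : E, ((1 + ‖x‖ ^ 2) / 2) ^ ((p : ℝ) / 2) =
      γ * ∫ y, ‖x - y‖ ^ p * (2 / (1 + ‖y‖ ^ 2)) ^ (((p : ℝ) + 2 * Module.finrank ℝ E) / 2))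
    {u : E → ℝ} (hupos : ∀ x, 0 < u x)
    (hueq : ∀ x, u x = γ * ∫ y, ‖x - y‖ ^ p *
      (2 / (1 + ‖y‖ ^ 2)) ^ (((p : ℝ) + 2 * Module.finrank ℝ E) / 2 - α * (p / 2)) *
        u y ^ (-α)) (x : E) :
    u x = ((1 + ‖x‖ ^ 2) / 2) ^ ((p : ℝ) / 2) := by
  set s : ℝ := ((p : ℝ) + 2 * Module.finrank ℝ E) / 2
  set f : E → ℝ := fun y => (2 / (1 + ‖y‖ ^ 2)) ^ (s - α * (p / 2)) * u y ^ (-α)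
  have hu_pot : ∀ x, u x = γ * powPotential p f x := fun x => by
    simpa only [powPotential, f, mul_assoc] using hueq x
  have hpos : ∀ x, 0 < powPotential p f x := fun x =>
    pos_of_mul_pos_right (hu_pot x ▸ hupos x) hγ.le
  have hf : ∀ y, f y = conformalNonlinearity (s - α * (p / 2)) α γ ‖y‖ (powPotential p f y) := by
    simp only [conformalNonlinearity, ← hu_pot, f, implies_true]
  set κ := 2 ^ ((p : ℝ) / 2) * u 0 with hκ_def
  have hκ : 0 < κ := mul_pos (by positivity) (hupos 0)
  have hu : ∀ x, u x = κ * ((1 + ‖x‖ ^ 2) / 2) ^ ((p : ℝ) / 2) := fun x => by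
    rw [hu_pot, powPotential_eq_one_add_norm_sq_rpow_mul hp hpos hf (by simp only [s]; linarith)
      hα hγ (by simp only [s]; push_cast; ring), mul_left_comm, ← hu_pot,
      Real.div_rpow (by positivity) zero_le_two, hκ_def]
    field_simp
  have hκ_eq : κ = κ ^ (-α) := by
    have hf_eq : ∀ y, f y = κ ^ (-α) * (2 / (1 + ‖y‖ ^ 2)) ^ s := fun y => by
      simp only [f, hu, ← inv_div 2 (1 + ‖y‖ ^ 2)]
      exact rpow_mul_const_mul_inv_rpow (by positivity) hκ.le s _ α
    have h0 := hu_pot 0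
    simp only [powPotential, hf_eq, mul_left_comm _ (κ ^ (-α)), integral_const_mul, ← hγeq,
      hu 0] at h0
    exact mul_right_cancel₀ (by positivity) h0
  rw [hu, eq_one_of_eq_rpow_neg hκ hα hκ_eq, one_mul]

end Liouville

end

/-- Liouville result, case `ε = 0`: a positive smooth solution of
`u(x) = γ ∫ |x−y|^{2m−n} (2/(1+|y|²))^{(n+2m)/2 + α(n−2m)/2} u(y)^{−α} dy`
with growth `u ≍ (1+|x|²)^{(2m−n)/2}` and `0 < α < (n+2m)/(2m−n)` must be
`u(x) = ((1+|x|²)/2)^{(2m−n)/2}`. Here `γ` is the constant from the context. -/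
theorem stmt12 (n m : ℕ) (hn : 3 ≤ n) (hodd : Odd n) (hmn : n < 2 * m)
    (α : ℝ) (hα0 : 0 < α) (hαc : α < ((n : ℝ) + 2 * m) / (2 * (m : ℝ) - n))
    (γ : ℝ) (hγ : 0 < γ)
    (hγeq : ∀ x : EuclideanSpace ℝ (Fin n),
      ((1 + ‖x‖ ^ 2) / 2) ^ ((2 * (m : ℝ) - n) / 2) =
        γ * ∫ y, ‖x - y‖ ^ (2 * m - n) * (2 / (1 + ‖y‖ ^ 2)) ^ (((n : ℝ) + 2 * m) / 2))
    (u : EuclideanSpace ℝ (Fin n) → ℝ) (husm : ContDiff ℝ (⊤ : ℕ∞) u)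
    (hupos : ∀ x, 0 < u x)
    (hbound : ∃ c : ℝ, 0 < c ∧ ∀ x,
      c⁻¹ * (1 + ‖x‖ ^ 2) ^ ((2 * (m : ℝ) - n) / 2) ≤ u x ∧
        u x ≤ c * (1 + ‖x‖ ^ 2) ^ ((2 * (m : ℝ) - n) / 2))
    (hueq : ∀ x, u x = γ * ∫ y, ‖x - y‖ ^ (2 * m - n) *
      (2 / (1 + ‖y‖ ^ 2)) ^ (((n : ℝ) + 2 * m) / 2 + α * ((n : ℝ) - 2 * m) / 2) *
        u y ^ (-α)) :
    ∀ x : EuclideanSpace ℝ (Fin n),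
      u x = ((1 + ‖x‖ ^ 2) / 2) ^ ((2 * (m : ℝ) - n) / 2) := by
  have hcast : ((2 * m - n : ℕ) : ℝ) = 2 * (m : ℝ) - n := by push_cast [hmn.le]; rfl
  have hpos : 0 < 2 * (m : ℝ) - n := by rw [← hcast]; exact_mod_cast Nat.sub_pos_of_lt hmn
  have : Nontrivial (EuclideanSpace ℝ (Fin n)) :=
    Module.nontrivial_of_finrank_pos (R := ℝ) (by rw [finrank_euclideanSpace_fin]; omega)
  have hexp : ((2 * m - n : ℕ) + 2 * (n : ℝ)) / 2 = ((n : ℝ) + 2 * m) / 2 := by rw [hcast]; ring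
  have hexp_sub : ((n : ℝ) + 2 * m) / 2 - α * ((2 * m - n : ℕ) / 2) =
      ((n : ℝ) + 2 * m) / 2 + α * ((n : ℝ) - 2 * m) / 2 := by rw [hcast]; ring
  rw [lt_div_iff₀ hpos] at hαc
  simpa only [hcast] using stmt12_general (p := 2 * m - n) (by omega) hα0.le
    (by rw [finrank_euclideanSpace_fin, hcast]; linarith) hγ
    (by rwa [finrank_euclideanSpace_fin, hexp, hcast]) hupos
    (by rwa [finrank_euclideanSpace_fin, hexp, hexp_sub])
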